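/- arXiv:2402.04943 — 2 statements merged into one kernel-verified Lean document; each statement's English description precedes it below -/
import Mathlib

section
/- Let p be a prime and suppose n satisfies Nat.fib (2n+1) < p. Then the cookie hash over 𝔽_p has no collisions among short strings: for any two distinct bit strings u ≠ v, each of length at most n, the matrices H(u) and H(v) reduced entrywise modulo p (as matrices over ZMod p) are distinct. -/
open Matrix

def A : Matrix (Fin 2) (Fin 2) ℤ := !![1, 2; 0, 1]
def B : Matrix (Fin 2) (Fin 2) ℤ := !![1, 0; 2, 1]
def C : Matrix (Fin 2) (Fin 2) ℤ := !![2, 1; 1, 1]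

/-- Auxiliary state machine for the cookie encoding.  The first argument is the
mode (`false` = normal, `true` = cookie), the second counts the current run of
identical bits relevant to a mode switch (consecutive 1s in normal mode,
consecutive 0s in cookie mode). -/
def encodeAux : Bool → ℕ → List Bool → List (Fin 3)
  | _, _, [] => []
  | false, r, b :: rest =>
      if b then
        (1 : Fin 3) ::
          (if r + 1 ≥ 3 then encodeAux true 0 rest else encodeAux false (r + 1) rest)
      else
        (0 : Fin 3) :: encodeAux false 0 rest
  | true, r, b :: rest =>
      if b then
        (2 : Fin 3) :: encodeAux true 0 rest
      else
        (0 : Fin 3) ::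
          (if r + 1 ≥ 3 then encodeAux false 0 rest else encodeAux true (r + 1) rest)

/-- The cookie encoding: in normal mode, 0 ↦ 0 and 1 ↦ 1, switching to cookie
mode after three consecutive 1 bits; in cookie mode, 0 ↦ 0 and 1 ↦ 2, switching
back to normal mode after three consecutive 0 bits. -/
def encode : List Bool → List (Fin 3) :=
  encodeAux false 0

/-- The cookie hash: the ordered product of the matrices `A`, `B`, `C`
corresponding to the symbols 0, 1, 2 of the cookie encoding. -/
def H (u : List Bool) : Matrix (Fin 2) (Fin 2) ℤ :=
  ((encode u).map (![A, B, C])).prod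

/-!
The three matrices are invertible and send the open positive quadrant of the plane into three
pairwise disjoint open sectors of that quadrant, none of which contains the vector `(1, 1)`. Hence
the image of `(1, 1)` under a product of these matrices reveals the first factor; cancelling it and
repeating recovers the whole word, so `H` is injective over `ℤ`. If `u` has length at most `n`, the
entries of `H u` lie between `0` and `fib (2 n + 1)`, so their residues modulo `p` determine them.
-/

open Function Set

section PingPong

variable {ι α : Type*} {f : ι → α → α} {s : Set α} {t : ι → Set α} {x : α}

theorem foldr_mem_of_forall_mapsTo (hmaps : ∀ i, MapsTo (f i) s s) (hx : x ∈ s) (l : List ι) :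
    l.foldr f x ∈ s :=
  List.foldrRecOn l f hx fun _ hy i _ ↦ hmaps i hy

theorem foldr_injective_of_pingPong (hmaps : ∀ i, MapsTo (f i) s (t i)) (hsub : ∀ i, t i ⊆ s)
    (hinj : ∀ i, InjOn (f i) s) (hdisj : Pairwise (Disjoint on t)) (hx : x ∈ s)
    (hbase : ∀ i, x ∉ t i) : Injective (List.foldr f x) := by
  have hmem (l : List ι) : l.foldr f x ∈ s :=
    foldr_mem_of_forall_mapsTo (fun i ↦ (hmaps i).mono_right (hsub i)) hx l
  have hhead (i : ι) (l : List ι) : (i :: l).foldr f x ∈ t i := hmaps i (hmem l)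
  intro l
  induction l with
  | nil =>
    rintro (_ | ⟨j, k⟩) h
    · rfl
    · exact (hbase j (mem_of_eq_of_mem h (hhead j k))).elim
  | cons i l ih =>
    rintro (_ | ⟨j, k⟩) h
    · exact (hbase i (mem_of_eq_of_mem h.symm (hhead i l))).elim
    · obtain rfl : i = j := by
        by_contra hij
        exact Set.disjoint_left.mp (hdisj hij) (hhead i l)
          (mem_of_eq_of_mem h (hhead j k))
      rw [ih (hinj i (hmem l) (hmem k) h)]

end PingPong

theorem prod_map_mulVec_eq_foldr {ι m R : Type*} [Fintype m] [DecidableEq m] [Semiring R]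
    (M : ι → Matrix m m R) (v : m → R) (l : List ι) :
    (l.map M).prod *ᵥ v = l.foldr (fun i w ↦ M i *ᵥ w) v := by
  induction l with
  | nil => simp
  | cons i l ih => rw [List.map_cons, List.prod_cons, ← mulVec_mulVec, ih, List.foldr_cons]

/-- The symbol written by the cookie encoding on reading bit `b`, where `cookie` is the mode. -/
def emittedSymbol (cookie b : Bool) : Fin 3 :=
  if b then if cookie then 2 else 1 else 0

/-- The mode and run length of the cookie encoding after reading bit `b`. The bits that count
towards a mode switch are the ones different from the mode flag. -/
def nextState (cookie : Bool) (r : ℕ) (b : Bool) : Bool × ℕ :=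
  if b = cookie then (cookie, 0) else if r + 1 ≥ 3 then (!cookie, 0) else (cookie, r + 1)

theorem emittedSymbol_injective (cookie : Bool) : Injective (emittedSymbol cookie) := by
  cases cookie <;> decide

theorem encodeAux_cons (cookie : Bool) (r : ℕ) (b : Bool) (u : List Bool) :
    encodeAux cookie r (b :: u) = emittedSymbol cookie b ::
      encodeAux (nextState cookie r b).1 (nextState cookie r b).2 u := by
  cases cookie <;> cases b <;> simp [encodeAux, emittedSymbol, nextState] <;> split_ifs <;> rfl

theorem length_encodeAux (cookie : Bool) (r : ℕ) (u : List Bool) :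
    (encodeAux cookie r u).length = u.length := by
  induction u generalizing cookie r with
  | nil => simp [encodeAux]
  | cons b u ih => rw [encodeAux_cons, List.length_cons, List.length_cons, ih]

theorem encodeAux_injective (cookie : Bool) (r : ℕ) : Injective (encodeAux cookie r) := by
  intro u v h
  have hlen : u.length = v.length := by
    rw [← length_encodeAux cookie r u, h, length_encodeAux]
  induction u generalizing cookie r v with
  | nil => exact (List.length_eq_zero_iff.mp hlen.symm).symm
  | cons a u ih =>
    obtain ⟨b, v, rfl⟩ := List.exists_cons_of_length_eq_add_one hlen.symm
    rw [encodeAux_cons, encodeAux_cons] at h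
    obtain ⟨hsymbol, htail⟩ := List.cons.inj h
    obtain rfl := emittedSymbol_injective cookie hsymbol
    rw [ih _ _ htail (Nat.succ.inj hlen)]

/-- The matrix attached to each symbol of the cookie encoding. -/
def symbolMatrix : Fin 3 → Matrix (Fin 2) (Fin 2) ℤ := ![A, B, C]

theorem symbolMatrix_mulVec_injective (a : Fin 3) : Injective (symbolMatrix a).mulVec :=
  mulVec_injective_of_det_ne_zero <| by fin_cases a <;> simp [symbolMatrix, A, B, C]

/-- The open positive quadrant of `ℤ²`, the common domain of the ping-pong argument. -/
def posQuadrant : Set (Fin 2 → ℤ) := {v | 0 < v 0 ∧ 0 < v 1}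

/-- The open sector spanned by the columns of the matrix of each symbol; these are the disjoint
targets of the ping-pong argument. -/
def symbolSector : Fin 3 → Set (Fin 2 → ℤ) :=
  ![{v | 0 < v 1 ∧ 2 * v 1 < v 0}, {v | 0 < v 0 ∧ 2 * v 0 < v 1},
    {v | v 1 < v 0 ∧ v 0 < 2 * v 1}]

theorem mapsTo_symbolMatrix_symbolSector (a : Fin 3) :
    MapsTo (symbolMatrix a).mulVec posQuadrant (symbolSector a) := by
  rintro v ⟨hv0, hv1⟩
  fin_cases a <;> simp [symbolMatrix, A, B, C, symbolSector, vecHead, vecTail] <;> omega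

theorem symbolSector_subset_posQuadrant (a : Fin 3) : symbolSector a ⊆ posQuadrant := by
  intro v hv
  fin_cases a <;> simp [symbolSector, posQuadrant] at hv ⊢ <;> omega

theorem pairwise_disjoint_symbolSector : Pairwise (Disjoint on symbolSector) := by
  intro a b hab
  refine Set.disjoint_left.mpr fun v ha hb ↦ ?_
  fin_cases a <;> fin_cases b <;> simp [symbolSector] at hab ha hb <;> omega

theorem one_notMem_symbolSector (a : Fin 3) : 1 ∉ symbolSector a := by
  fin_cases a <;> simp [symbolSector]

theorem prod_map_symbolMatrix_injective :
    Injective fun l : List (Fin 3) ↦ (l.map symbolMatrix).prod := by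
  have hfoldr : Injective (List.foldr (fun a ↦ (symbolMatrix a).mulVec) 1) :=
    foldr_injective_of_pingPong mapsTo_symbolMatrix_symbolSector symbolSector_subset_posQuadrant
      (fun a ↦ (symbolMatrix_mulVec_injective a).injOn) pairwise_disjoint_symbolSector
      (by simp [posQuadrant]) one_notMem_symbolSector
  refine fun l k h ↦ hfoldr ?_
  simpa only [prod_map_mulVec_eq_foldr] using congrArg (· *ᵥ 1) h

theorem H_injective : Injective H :=
  prod_map_symbolMatrix_injective.comp (encodeAux_injective false 0)

/-- The region of `ℤ²` containing the columns of products of `k` symbol matrices. The bound on the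
coordinate sum is the extra invariant that bounds the coordinates after one more multiplication. -/
def fibRegion (k : ℕ) : Set (Fin 2 → ℤ) :=
  {v | (∀ i, v i ∈ Icc 0 (Nat.fib (2 * k + 1) : ℤ)) ∧ v 0 + v 1 ≤ Nat.fib (2 * k + 2)}

theorem single_mem_fibRegion_zero (j : Fin 2) : Pi.single j 1 ∈ fibRegion 0 := by
  fin_cases j <;> simp [fibRegion, Fin.forall_fin_two]

theorem mapsTo_symbolMatrix_fibRegion (a : Fin 3) (k : ℕ) :
    MapsTo (symbolMatrix a).mulVec (fibRegion k) (fibRegion (k + 1)) := by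
  rintro v ⟨hv, hsum⟩
  obtain ⟨⟨hv0_nonneg, hv0_le⟩, hv1_nonneg, hv1_le⟩ := Fin.forall_fin_two.mp hv
  have hfib_odd : Nat.fib (2 * (k + 1) + 1) = Nat.fib (2 * k + 1) + Nat.fib (2 * k + 2) :=
    Nat.fib_add_two
  have hfib_even : Nat.fib (2 * (k + 1) + 2) = Nat.fib (2 * k + 2) + Nat.fib (2 * (k + 1) + 1) :=
    Nat.fib_add_two
  refine ⟨Fin.forall_fin_two.mpr ?_, ?_⟩ <;>
    fin_cases a <;> simp [symbolMatrix, A, B, C, vecHead, vecTail, hfib_even, hfib_odd] <;> omega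

theorem foldr_symbolMatrix_mem_fibRegion {v : Fin 2 → ℤ} (hv : v ∈ fibRegion 0)
    (l : List (Fin 3)) : l.foldr (fun a ↦ (symbolMatrix a).mulVec) v ∈ fibRegion l.length := by
  induction l with
  | nil => exact hv
  | cons a l ih => exact mapsTo_symbolMatrix_fibRegion a l.length ih

theorem col_prod_map_symbolMatrix_mem_fibRegion (l : List (Fin 3)) (j : Fin 2) :
    (l.map symbolMatrix).prod.col j ∈ fibRegion l.length := by
  rw [← mulVec_single_one, prod_map_mulVec_eq_foldr]
  exact foldr_symbolMatrix_mem_fibRegion (single_mem_fibRegion_zero j) l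

theorem H_apply_mem_Icc_fib {n : ℕ} {u : List Bool} (hu : u.length ≤ n) (i j : Fin 2) :
    H u i j ∈ Icc 0 (Nat.fib (2 * n + 1) : ℤ) := by
  have hlen : (encode u).length ≤ n := (length_encodeAux false 0 u).trans_le hu
  have hentry : H u i j ∈ Icc 0 (Nat.fib (2 * (encode u).length + 1) : ℤ) :=
    (col_prod_map_symbolMatrix_mem_fibRegion (encode u) j).1 i
  exact Icc_subset_Icc_right (by gcongr) hentry

theorem cookie_hash_no_short_collisions_general {R : Type*} [AddGroupWithOne R] (p : ℕ)
    [CharP R p] {n : ℕ} (hfib : Nat.fib (2 * n + 1) < p) :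
    InjOn (fun u ↦ (H u).map (Int.cast : ℤ → R)) {u | u.length ≤ n} := by
  intro u hu v hv h
  have hmem {w : List Bool} (hw : w.length ≤ n) (i j : Fin 2) : H w i j ∈ Ico 0 (p : ℤ) :=
    Icc_subset_Ico_right (by exact_mod_cast hfib) (H_apply_mem_Icc_fib hw i j)
  refine H_injective (Matrix.ext fun i j ↦ ?_)
  exact CharP.intCast_injOn_Ico R p (hmem hu i j) (hmem hv i j) (congrFun₂ h i j)

/-- No collisions of the cookie hash over `𝔽_p` among short strings: if
`Nat.fib (2n+1) < p` then distinct bit strings of length at most `n` have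
distinct hashes modulo `p`. -/
theorem cookie_hash_no_short_collisions (p : ℕ) (hp : p.Prime) (n : ℕ)
    (hfib : Nat.fib (2 * n + 1) < p)
    (u v : List Bool) (hu : u.length ≤ n) (hv : v.length ≤ n) (hne : u ≠ v) :
    (H u).map (Int.cast : ℤ → ZMod p) ≠ (H v).map (Int.cast : ℤ → ZMod p) :=
  fun h ↦ hne (cookie_hash_no_short_collisions_general p hfib hu hv h)
end

section
/- Let X = ![![1,1],![0,1]] and Y = ![![1,0],![1,1]]. For every n ≥ 1, (X·Y)^n has all entries positive, and its largest entry is Nat.fib (2n+1), which as a real number satisfies Nat.fib (2n+1) ≤ ((3 + √5)/2)^n · ((1+√5)/2). -/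
open Matrix

def X : Matrix (Fin 2) (Fin 2) ℤ := !![1, 1; 0, 1]
def Y : Matrix (Fin 2) (Fin 2) ℤ := !![1, 0; 1, 1]

/-!
The product `X * Y` is the square of the Fibonacci matrix `Q = !![1, 1; 1, 0]`, whose powers have
consecutive Fibonacci numbers as entries. The growth bound comes from
`fib (n + 1) = φ ^ n + ψ * fib n`, where the conjugate `ψ` of the golden ratio `φ` is negative.
-/

section FibMatrix

variable (R : Type*) [Semiring R]

/-- The Fibonacci `Q`-matrix, which advances a pair of consecutive Fibonacci numbers
`(fib (n + 1), fib n)` by one step. -/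
def fibMatrix : Matrix (Fin 2) (Fin 2) R := !![1, 1; 1, 0]

theorem fibMatrix_pow_succ (n : ℕ) :
    fibMatrix R ^ (n + 1) =
      !![(Nat.fib (n + 2) : R), (Nat.fib (n + 1) : R);
         (Nat.fib (n + 1) : R), (Nat.fib n : R)] := by
  induction n with
  | zero => simp [fibMatrix]
  | succ n ih =>
    rw [pow_succ, ih, fibMatrix, Matrix.mul_fin_two, Nat.fib_add_two (n := n + 1),
      Nat.fib_add_two (n := n)]
    simp [add_comm]

theorem fibMatrix_pow_zero_zero (n : ℕ) : (fibMatrix R ^ n) 0 0 = Nat.fib (n + 1) := by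
  cases n with
  | zero => simp
  | succ n => simp [fibMatrix_pow_succ]

variable [PartialOrder R] [IsOrderedRing R]

theorem fibMatrix_pow_apply_pos [Nontrivial R] {n : ℕ} (hn : 2 ≤ n) (i j : Fin 2) :
    0 < (fibMatrix R ^ n) i j := by
  obtain ⟨m, rfl⟩ := Nat.exists_eq_add_of_le' hn
  rw [fibMatrix_pow_succ]
  fin_cases i <;> fin_cases j <;> simp

theorem fibMatrix_pow_apply_le (n : ℕ) (i j : Fin 2) :
    (fibMatrix R ^ n) i j ≤ Nat.fib (n + 1) := by
  cases n with
  | zero => fin_cases i <;> fin_cases j <;> simp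
  | succ n =>
    have fib_le {k : ℕ} (hk : k ≤ n + 2) : (Nat.fib k : R) ≤ Nat.fib (n + 2) :=
      Nat.mono_cast (Nat.fib_mono hk)
    rw [fibMatrix_pow_succ]
    fin_cases i <;> fin_cases j <;> exact fib_le (by lia)

end FibMatrix

theorem X_mul_Y_eq_fibMatrix_sq : X * Y = fibMatrix ℤ ^ 2 := by
  simp [X, Y, fibMatrix, sq]

theorem X_mul_Y_pow_eq_fibMatrix_pow (n : ℕ) : (X * Y) ^ n = fibMatrix ℤ ^ (2 * n) := by
  rw [X_mul_Y_eq_fibMatrix_sq, pow_mul]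

theorem fib_succ_le_goldenRatio_pow (n : ℕ) : (Nat.fib (n + 1) : ℝ) ≤ Real.goldenRatio ^ n := by
  rw [← Real.fib_succ_sub_goldenConj_mul_fib]
  have conj_term_nonpos : Real.goldenConj * Nat.fib n ≤ 0 :=
    mul_nonpos_of_nonpos_of_nonneg Real.goldenConj_neg.le (Nat.cast_nonneg _)
  linarith

theorem three_add_sqrt_five_div_two_eq_goldenRatio_sq :
    (3 + Real.sqrt 5) / 2 = Real.goldenRatio ^ 2 := by
  rw [Real.goldenRatio_sq, Real.goldenRatio]
  ring

/-- For `n ≥ 1`, the matrix `(X·Y)^n` has all entries positive, its largest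
entry equals `Nat.fib (2n+1)`, and as a real number
`Nat.fib (2n+1) ≤ ((3+√5)/2)^n · ((1+√5)/2)`. -/
theorem XY_pow_largest_entry (n : ℕ) (hn : 1 ≤ n) :
    (∀ i j : Fin 2, 0 < ((X * Y) ^ n) i j) ∧
    (∀ i j : Fin 2, ((X * Y) ^ n) i j ≤ (Nat.fib (2 * n + 1) : ℤ)) ∧
    (∃ i j : Fin 2, ((X * Y) ^ n) i j = (Nat.fib (2 * n + 1) : ℤ)) ∧
    ((Nat.fib (2 * n + 1) : ℝ) ≤
      ((3 + Real.sqrt 5) / 2) ^ n * ((1 + Real.sqrt 5) / 2)) := by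
  rw [X_mul_Y_pow_eq_fibMatrix_pow]
  refine ⟨fibMatrix_pow_apply_pos ℤ (by lia), fibMatrix_pow_apply_le ℤ (2 * n),
    ⟨0, 0, fibMatrix_pow_zero_zero ℤ (2 * n)⟩, ?_⟩
  calc (Nat.fib (2 * n + 1) : ℝ)
      ≤ Real.goldenRatio ^ (2 * n) := fib_succ_le_goldenRatio_pow (2 * n)
    _ ≤ Real.goldenRatio ^ (2 * n) * Real.goldenRatio :=
      le_mul_of_one_le_right (pow_nonneg Real.goldenRatio_pos.le _) Real.one_lt_goldenRatio.le
    _ = ((3 + Real.sqrt 5) / 2) ^ n * ((1 + Real.sqrt 5) / 2) := by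
      rw [pow_mul, three_add_sqrt_five_div_two_eq_goldenRatio_sq, Real.goldenRatio]
end
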